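/- There exists an absolute constant c > 0 such that for all positive integers f, n, k, every n-vertex unweighted graph G admits an f-FD k^{c·k}-spanner H ⊆ G with at most c·f·n^{1+1/k}·(log n)^c edges. -/

import Mathlib

open SimpleGraph
open scoped ENNReal

/-- `F` has faulty-degree at most `f`: every vertex is incident to at most `f` edges of `F`. -/
def DegLE {V : Type} (F : Set (Sym2 V)) (f : ℕ) : Prop :=
  ∀ v : V, {e ∈ F | v ∈ e}.ncard ≤ f

/-- `H` is an `f`-faulty-degree `t`-spanner of `G` (unweighted distances, `∞` when
disconnected, real stretch factor `t`). -/
def IsFDSpanner {V : Type} (G H : SimpleGraph V) (f : ℕ) (t : ℝ) : Prop :=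
  H ≤ G ∧ ∀ F : Set (Sym2 V), F ⊆ G.edgeSet → DegLE F f →
    ∀ u v : V,
      ((H.deleteEdges F).edist u v : ℝ≥0∞) ≤
        ENNReal.ofReal t * ((G.deleteEdges F).edist u v : ℝ≥0∞)


/- Call `H` critical if every nonempty subgraph has an edge whose removal, together with some
`f`-degree fault set, stretches its endpoints beyond `t`. A maximal critical subgraph of `G` is an
`f`-FD `t`-spanner, since an unspanned edge could be added.

A critical `H` is sparse. Take a critical edge `uv` with faults `F` and let `D = H \ F`. As
`n² ≤ q ^ N`, among the radii `3 ^ i`, `i < N`, there is a `ρ` for which the `D`-balls around `u`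
and around `v` both grow by a factor of at most `q` from `ρ` to `3ρ`. Say the ball `B` around `v` is
the smaller one. Deleting the at most `(f + 1) q |B|` faults that meet the `3ρ`-ball around `v`
confines the `2ρ`-ball of every `x ∈ B` to that `3ρ`-ball, so it loses the whole `ρ`-ball around `u`
and `log |ball x (2ρ)|` drops by at least `1 / (q + 1)`. The number of deleted edges is thus
proportional to the drop of `∑ x, ∑ i < N, log |ball x (2 · 3 ^ i)|`, which is at most `n N log n`.
With `N = 4k` and `q ^ N = n²` this gives `O(f k n ^ (1 + 1 / k) log n)` edges. -/

section Ball

variable {V : Type*} {G H : SimpleGraph V} {u v x y : V} {r s : ℕ∞}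

lemma edist_le_mul_edist_of_adj {t : ℕ∞} (ht : t ≠ 0)
    (hGH : ∀ ⦃x y⦄, G.Adj x y → H.edist x y ≤ t) (u v : V) :
    H.edist u v ≤ t * G.edist u v := by
  have le_mul_length : ∀ {u v : V} (p : G.Walk u v), H.edist u v ≤ t * p.length := by
    intro u v p
    induction p with
    | nil => simp
    | cons hxy p ih =>
      rw [Walk.length_cons, add_comm, Nat.cast_add, mul_add, Nat.cast_one, mul_one]
      exact SimpleGraph.edist_triangle.trans (add_le_add (hGH hxy) ih)
  by_cases htop : G.edist u v = ⊤
  · simp [htop, ENat.mul_top ht]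
  · obtain ⟨p, hp⟩ := exists_walk_of_edist_ne_top htop
    exact hp ▸ le_mul_length p

lemma ball_subset_ball_of_le (hGH : G ≤ H) (v : V) (r : ℕ∞) : G.ball v r ⊆ H.ball v r :=
  fun _ hx => (edist_anti hGH).trans_lt hx

lemma disjoint_ball_of_add_le_edist (h : r + s ≤ G.edist u v) :
    Disjoint (G.ball u r) (G.ball v s) := by
  refine Set.disjoint_left.2 fun w (hu : G.edist w u < r) (hv : G.edist w v < s) => ?_
  refine h.not_gt (SimpleGraph.edist_triangle.trans_lt (b := G.edist u w + G.edist w v) ?_)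
  rw [edist_comm] at hu
  exact ENat.add_lt_add hu hv

lemma ball_subset_ball_of_adj (huv : G.Adj u v) (hx : x ∈ G.ball v s) :
    G.ball u r ⊆ G.ball x (r + s) := by
  intro y (hy : G.edist y u < r)
  have hux : G.edist u x ≤ s := calc
    G.edist u x ≤ G.edist u v + G.edist v x := SimpleGraph.edist_triangle
    _ = G.edist x v + 1 := by rw [edist_eq_one_iff_adj.2 huv, edist_comm, add_comm]
    _ ≤ s := Order.add_one_le_of_lt hx
  have hux_ne_top : G.edist u x ≠ ⊤ :=
    edist_ne_top_iff_reachable.2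
      (huv.reachable.trans (reachable_of_edist_ne_top (ne_top_of_lt hx)).symm)
  calc G.edist y x
      ≤ G.edist y u + G.edist u x := SimpleGraph.edist_triangle
    _ < r + s := ENat.add_lt_add_of_lt_of_le hux_ne_top hy hux

lemma mem_ball_of_walk (hHG : ∀ ⦃x⦄, x ∈ G.ball v r → ∀ ⦃y⦄, H.Adj x y → G.Adj x y)
    (p : H.Walk x y) (hp : G.edist x v + p.length < r) : y ∈ G.ball v r := by
  induction p with
  | nil => simpa using hp
  | @cons x z y hxz p ih =>
    have hx : x ∈ G.ball v r := le_self_add.trans_lt hp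
    refine ih (lt_of_le_of_lt ?_ hp)
    calc G.edist z v + p.length
        ≤ G.edist z x + G.edist x v + p.length := by gcongr; exact SimpleGraph.edist_triangle
      _ = G.edist x v + (Walk.cons hxz p).length := by
        rw [edist_eq_one_iff_adj.2 (hHG hx hxz).symm, Walk.length_cons]
        push_cast
        ring

lemma ball_subset_ball_of_locally_le
    (hHG : ∀ ⦃x⦄, x ∈ G.ball v (r + s) → ∀ ⦃y⦄, H.Adj x y → G.Adj x y) (hx : x ∈ G.ball v r) :
    H.ball x s ⊆ G.ball v (r + s) := by
  intro y (hy : H.edist y x < s)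
  obtain ⟨p, hp⟩ := exists_walk_of_edist_ne_top hy.ne_top
  refine mem_ball_of_walk hHG p.reverse ?_
  rw [Walk.length_reverse, hp]
  exact ENat.add_lt_add hx hy

lemma ncard_ball_pos [Finite V] (G : SimpleGraph V) (v : V) (hr : r ≠ 0) :
    0 < (G.ball v r).ncard :=
  (Set.ncard_pos (Set.toFinite _)).2 ⟨v, mem_ball_self (pos_iff_ne_zero.2 hr)⟩

lemma ncard_ball_le_ncard_ball [Finite V] (hGH : G ≤ H) (v : V) (hrs : r ≤ s) :
    (G.ball v r).ncard ≤ (H.ball v s).ncard :=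
  Set.ncard_le_ncard ((ball_subset_ball_of_le hGH v r).trans (ball_mono hrs))

end Ball

section Growth

lemma exists_lt_succ_le_mul {a : ℕ → ℝ} {q : ℝ} {N : ℕ} (hN : 0 < N) (hq : 0 ≤ q)
    (ha_zero : 1 ≤ a 0) (ha : a N ≤ q ^ N) : ∃ i < N, a (i + 1) ≤ q * a i := by
  by_contra! hgrow
  have := geom_lt hq hN hgrow
  have := le_mul_of_one_le_right (pow_nonneg hq N) ha_zero
  linarith

lemma exists_lt_succ_le_mul_and {a b : ℕ → ℝ} {q n : ℝ} {N : ℕ} (hN : 0 < N) (hq : 0 ≤ q)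
    (ha_mono : Monotone a) (hb_mono : Monotone b) (ha_zero : 1 ≤ a 0) (hb_zero : 1 ≤ b 0)
    (ha : a N ≤ n) (hb : b N ≤ n) (hn : n ^ 2 ≤ q ^ N) :
    ∃ i < N, a (i + 1) ≤ q * a i ∧ b (i + 1) ≤ q * b i := by
  have ha_pos (i) : 0 < a i := by linarith [ha_mono i.zero_le]
  have hb_pos (i) : 0 < b i := by linarith [hb_mono i.zero_le]
  obtain ⟨i, hi, hab⟩ : ∃ i < N, a (i + 1) * b (i + 1) ≤ q * (a i * b i) := by
    refine exists_lt_succ_le_mul (a := fun i => a i * b i) hN hq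
      (one_le_mul_of_one_le_of_one_le ha_zero hb_zero) (le_trans ?_ hn)
    calc a N * b N ≤ n * n := mul_le_mul ha hb (hb_pos N).le ((ha_pos N).le.trans ha)
      _ = n ^ 2 := (sq n).symm
  refine ⟨i, hi, le_of_mul_le_mul_right ?_ (hb_pos i), le_of_mul_le_mul_right ?_ (ha_pos i)⟩
  · calc a (i + 1) * b i ≤ a (i + 1) * b (i + 1) :=
          mul_le_mul_of_nonneg_left (hb_mono i.le_succ) (ha_pos _).le
      _ ≤ q * a i * b i := by linarith
  · calc b (i + 1) * a i ≤ b (i + 1) * a (i + 1) :=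
          mul_le_mul_of_nonneg_left (ha_mono i.le_succ) (hb_pos _).le
      _ ≤ q * b i * a i := by linarith

lemma exists_ncard_ball_succ_le_mul {V : Type*} [Finite V] (G : SimpleGraph V) (u v : V)
    {ρ : ℕ → ℕ∞} {q : ℝ} {N : ℕ} (hρ : Monotone ρ) (hρ_zero : ρ 0 ≠ 0) (hN : 0 < N) (hq : 0 ≤ q)
    (hcard : (Nat.card V : ℝ) ^ 2 ≤ q ^ N) :
    ∃ i < N,
      ((G.ball u (ρ (i + 1))).ncard : ℝ) ≤ q * (G.ball u (ρ i)).ncard ∧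
      ((G.ball v (ρ (i + 1))).ncard : ℝ) ≤ q * (G.ball v (ρ i)).ncard := by
  have ncard_mono (w : V) : Monotone fun i => ((G.ball w (ρ i)).ncard : ℝ) :=
    fun _ _ hij => Nat.cast_le.2 (ncard_ball_le_ncard_ball le_rfl w (hρ hij))
  have one_le_ncard (w : V) : (1 : ℝ) ≤ (G.ball w (ρ 0)).ncard :=
    Nat.one_le_cast.2 (ncard_ball_pos G w hρ_zero)
  have ncard_le (w : V) : ((G.ball w (ρ N)).ncard : ℝ) ≤ Nat.card V :=
    Nat.cast_le.2 (Set.ncard_le_card _)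
  exact exists_lt_succ_le_mul_and hN hq (ncard_mono u) (ncard_mono v) (one_le_ncard u)
    (one_le_ncard v) (ncard_le u) (ncard_le v) hcard

end Growth

section Potential

/-- The logarithmic volume of `G` at radius `r`: the sum over all vertices of the logarithm of the
size of the open ball of radius `r` around it. -/
noncomputable def logVolume {V : Type*} [Fintype V] (G : SimpleGraph V) (r : ℕ∞) : ℝ :=
  ∑ x, Real.log (G.ball x r).ncard

/-- The potential that measures the progress of deleting edges: logarithmic volumes summed over the
first `N` scales. The radius at scale `i` is twice the radius `3 ^ i` at which the growth of balls
is observed. -/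
noncomputable def ballPotential {V : Type*} [Fintype V] (N : ℕ) (G : SimpleGraph V) : ℝ :=
  ∑ i ∈ Finset.range N, logVolume G (2 * 3 ^ i)

lemma log_ncard_ball_mono {V : Type*} [Finite V] {G H : SimpleGraph V} (hGH : G ≤ H) (x : V)
    (r : ℕ∞) : Real.log (G.ball x r).ncard ≤ Real.log (H.ball x r).ncard := by
  rcases eq_or_ne r 0 with rfl | hr
  · simp only [ball_zero, le_refl]
  · exact Real.log_le_log (Nat.cast_pos.2 (ncard_ball_pos G x hr))
      (Nat.cast_le.2 (ncard_ball_le_ncard_ball hGH x le_rfl))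

variable {V : Type*} [Fintype V] {G H : SimpleGraph V}

lemma logVolume_mono (r : ℕ∞) : Monotone fun G : SimpleGraph V => logVolume G r :=
  fun _ _ hGH => Finset.sum_le_sum fun x _ => log_ncard_ball_mono hGH x r

lemma ncard_mul_le_logVolume_sub (hGH : G ≤ H) (r : ℕ∞) (S : Set V) {δ : ℝ}
    (hδ : ∀ x ∈ S, δ ≤ Real.log (H.ball x r).ncard - Real.log (G.ball x r).ncard) :
    S.ncard * δ ≤ logVolume H r - logVolume G r := by
  classical
  rw [logVolume, logVolume, ← Finset.sum_sub_distrib, Set.ncard_eq_toFinset_card', ← nsmul_eq_mul]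
  refine (Finset.card_nsmul_le_sum _ _ _ fun x hx => hδ x (Set.mem_toFinset.1 hx)).trans ?_
  exact Finset.sum_le_sum_of_subset_of_nonneg (Finset.subset_univ _)
    fun x _ _ => sub_nonneg.2 (log_ncard_ball_mono hGH x r)

lemma logVolume_sub_le_ballPotential_sub (hGH : G ≤ H) {i N : ℕ} (hi : i < N) :
    logVolume H (2 * 3 ^ i) - logVolume G (2 * 3 ^ i) ≤ ballPotential N H - ballPotential N G := by
  rw [ballPotential, ballPotential, ← Finset.sum_sub_distrib]
  exact Finset.single_le_sum (f := fun j => logVolume H (2 * 3 ^ j) - logVolume G (2 * 3 ^ j))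
    (fun j _ => sub_nonneg.2 (logVolume_mono _ hGH)) (Finset.mem_range.2 hi)

lemma ballPotential_nonneg (N : ℕ) (G : SimpleGraph V) : 0 ≤ ballPotential N G :=
  Finset.sum_nonneg fun _ _ => Finset.sum_nonneg fun _ _ => Real.log_natCast_nonneg _

lemma logVolume_le (G : SimpleGraph V) (r : ℕ∞) :
    logVolume G r ≤ Fintype.card V * Real.log (Fintype.card V) := by
  rw [← nsmul_eq_mul]
  refine Finset.sum_le_card_nsmul _ _ _ fun x _ => ?_
  have hball : (G.ball x r).ncard ≤ Fintype.card V :=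
    (Set.ncard_le_card _).trans_eq Nat.card_eq_fintype_card
  rcases (G.ball x r).ncard.eq_zero_or_pos with h0 | hpos
  · simpa only [h0, Nat.cast_zero, Real.log_zero] using Real.log_natCast_nonneg _
  · exact Real.log_le_log (Nat.cast_pos.2 hpos) (Nat.cast_le.2 hball)

lemma ballPotential_le (N : ℕ) (G : SimpleGraph V) :
    ballPotential N G ≤ N * (Fintype.card V * Real.log (Fintype.card V)) := by
  simpa only [ballPotential, Finset.card_range, nsmul_eq_mul] using
    Finset.sum_le_card_nsmul (Finset.range N) (fun i => logVolume G (2 * 3 ^ i)) _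
      fun i _ => logVolume_le G _

end Potential

section Faults

/-- The faults of `F` that have an endpoint in `S`. Within `S`, deleting only these is as good as
deleting all of `F`, and there are at most `f * |S|` of them. -/
def faultsMeeting {V : Type*} (F : Set (Sym2 V)) (S : Set V) : Set (Sym2 V) :=
  {e ∈ F | ∃ w ∈ e, w ∈ S}

variable {V : Type} {G H : SimpleGraph V} {F : Set (Sym2 V)} {f : ℕ}

lemma DegLE.insert_fault [Finite V] (hF : DegLE F f) (e : Sym2 V) : DegLE (insert e F) (f + 1) := by
  intro v
  have hsub : {e' ∈ insert e F | v ∈ e'} ⊆ insert e {e' ∈ F | v ∈ e'} :=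
    fun e' he' => he'.1.imp_right fun heF => ⟨heF, he'.2⟩
  calc {e' ∈ insert e F | v ∈ e'}.ncard
      ≤ (insert e {e' ∈ F | v ∈ e'}).ncard := Set.ncard_le_ncard hsub
    _ ≤ {e' ∈ F | v ∈ e'}.ncard + 1 := Set.ncard_insert_le _ _
    _ ≤ f + 1 := Nat.add_le_add_right (hF v) 1

lemma DegLE.ncard_faultsMeeting_le [Finite V] (hF : DegLE F f) (S : Set V) :
    (faultsMeeting F S).ncard ≤ f * S.ncard := by
  classical
  have := Fintype.ofFinite V
  have hcover : faultsMeeting F S ⊆ ⋃ w ∈ S.toFinset, {e ∈ F | w ∈ e} := by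
    rintro e ⟨he, w, hwe, hwS⟩
    exact Set.mem_biUnion (Set.mem_toFinset.2 hwS) ⟨he, hwe⟩
  calc (faultsMeeting F S).ncard
      ≤ (⋃ w ∈ S.toFinset, {e ∈ F | w ∈ e}).ncard := Set.ncard_le_ncard hcover
    _ ≤ ∑ w ∈ S.toFinset, {e ∈ F | w ∈ e}.ncard := Finset.set_ncard_biUnion_le _ _
    _ ≤ S.toFinset.card • f := Finset.sum_le_card_nsmul _ _ _ fun w _ => hF w
    _ = f * S.ncard := by rw [smul_eq_mul, mul_comm, Set.ncard_eq_toFinset_card']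

lemma isFDSpanner_of_adj {t : ℕ} (ht : t ≠ 0) (hHG : H ≤ G)
    (hstretch : ∀ F, DegLE F f → ∀ u v, (G.deleteEdges F).Adj u v →
      (H.deleteEdges F).edist u v ≤ t) :
    IsFDSpanner G H f t := by
  refine ⟨hHG, fun F _ hF u v => ?_⟩
  rw [ENNReal.ofReal_natCast, ← ENat.toENNReal_coe, ← ENat.toENNReal_mul, ENat.toENNReal_le]
  exact edist_le_mul_edist_of_adj (Nat.cast_ne_zero.2 ht) (hstretch F hF) u v

lemma IsFDSpanner.mono {s t : ℝ} (h : IsFDSpanner G H f s) (hst : s ≤ t) : IsFDSpanner G H f t :=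
  ⟨h.1, fun F hFG hF u v => (h.2 F hFG hF u v).trans (by gcongr)⟩

lemma isFDSpanner_self (G : SimpleGraph V) (f : ℕ) : IsFDSpanner G G f 1 :=
  ⟨le_rfl, fun F _ _ u v => by rw [ENNReal.ofReal_one, one_mul]⟩

end Faults

section Critical

variable {V : Type} {H : SimpleGraph V} {f t : ℕ}

/-- `H` is critical for `f` faults and stretch `t` if every nonempty subgraph `H'` of `H` has an
edge `uv` such that `u` and `v` are at distance more than `t` in `H'` once `uv` and the edges of
some `f`-degree fault set are deleted. This is the property, inherited by subgraphs, that the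
greedy spanner algorithm ensures. -/
def IsFDCritical (H : SimpleGraph V) (f t : ℕ) : Prop :=
  ∀ H' ≤ H, H' ≠ ⊥ → ∃ u v, H'.Adj u v ∧ ∃ F, DegLE F f ∧
    t < (H'.deleteEdges (insert s(u, v) F)).edist u v

lemma isFDCritical_bot : IsFDCritical (⊥ : SimpleGraph V) f t :=
  fun _ hle hne => absurd (le_bot_iff.1 hle) hne

lemma IsFDCritical.mono {H' : SimpleGraph V} (hH : IsFDCritical H f t) (hle : H' ≤ H) :
    IsFDCritical H' f t :=
  fun H'' hle' => hH H'' (hle'.trans hle)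

lemma IsFDCritical.sup_edge {F : Set (Sym2 V)} {x y : V} (hH : IsFDCritical H f t)
    (hF : DegLE F f) (hxy : t < (H.deleteEdges F).edist x y) :
    IsFDCritical (H ⊔ edge x y) f t := by
  intro H' hle hne
  have hdiff : H' \ edge x y ≤ H := sdiff_le_iff'.2 hle
  by_cases hadj : H'.Adj x y
  · refine ⟨x, y, hadj, F, hF, hxy.trans_le (edist_anti ?_)⟩
    rw [Set.insert_eq, ← deleteEdges_deleteEdges]
    exact deleteEdges_mono hdiff
  · exact hH H' (sdiff_edge H' hadj ▸ hdiff) hne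

lemma exists_isFDSpanner_isFDCritical [Finite V] (G : SimpleGraph V) (f : ℕ) (ht : t ≠ 0) :
    ∃ H, IsFDSpanner G H f t ∧ IsFDCritical H f t := by
  obtain ⟨H, -, ⟨hHG, hcrit⟩, hmax⟩ :=
    Finite.exists_le_maximal (p := fun H => H ≤ G ∧ IsFDCritical H f t) ⟨bot_le, isFDCritical_bot⟩
  refine ⟨H, isFDSpanner_of_adj ht hHG fun F hF u v huv => ?_, hcrit⟩
  rw [deleteEdges_adj] at huv
  by_contra! hfar
  have hedge : edge u v ≤ H := le_sup_right.trans <|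
    hmax ⟨sup_le hHG ((edge_le_iff G).2 (Or.inr huv.1)), hcrit.sup_edge hF hfar⟩ le_sup_left
  have hadj : (H.deleteEdges F).Adj u v := by
    rw [deleteEdges_adj]
    exact ⟨((edge_le_iff H).1 hedge).resolve_left huv.1.ne, huv.2⟩
  rw [edist_eq_one_iff_adj.2 hadj] at hfar
  exact ht (Nat.lt_one_iff.1 (by exact_mod_cast hfar))

end Critical

section Sparsify

lemma one_div_le_log_sub_log {a b s q : ℝ} (hs : 0 < s) (hb : 0 < b) (hq : 0 ≤ q)
    (hbq : b ≤ q * s) (hbs : b + s ≤ a) : 1 / (q + 1) ≤ Real.log a - Real.log b := by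
  have ha : 0 < a := by linarith
  calc 1 / (q + 1) ≤ (a - b) / a := by
        rw [div_le_div_iff₀ (by positivity) ha]
        nlinarith
    _ = 1 - (a / b)⁻¹ := by rw [inv_div, sub_div, div_self ha.ne']
    _ ≤ Real.log (a / b) := Real.one_sub_inv_le_log_of_pos (div_pos ha hb)
    _ = Real.log a - Real.log b := Real.log_div ha.ne' hb.ne'

variable {V : Type*} {D H H' : SimpleGraph V} {u v x : V} {ρ : ℕ∞}

lemma ncard_ball_add_ncard_ball_le [Finite V] (hDH : D ≤ H) (hHH : H' ≤ H) (huv : H.Adj u v)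
    (hsep : 4 * ρ ≤ D.edist u v) (hx : x ∈ D.ball v ρ)
    (hconf : H'.ball x (2 * ρ) ⊆ D.ball v (3 * ρ)) :
    (H'.ball x (2 * ρ)).ncard + (D.ball u ρ).ncard ≤ (H.ball x (2 * ρ)).ncard := by
  have hdisj : Disjoint (H'.ball x (2 * ρ)) (D.ball u ρ) :=
    ((disjoint_ball_of_add_le_edist (le_of_eq_of_le (by ring) hsep)).mono_right hconf).symm
  have hu : D.ball u ρ ⊆ H.ball x (2 * ρ) := by
    rw [two_mul]
    exact (ball_subset_ball_of_le hDH u ρ).trans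
      (ball_subset_ball_of_adj huv (ball_subset_ball_of_le hDH v ρ hx))
  rw [← Set.ncard_union_eq hdisj]
  exact Set.ncard_le_ncard (Set.union_subset (ball_subset_ball_of_le hHH x _) hu)

lemma ball_deleteEdges_faultsMeeting_subset {F : Set (Sym2 V)}
    (hx : x ∈ (H.deleteEdges F).ball v ρ) :
    (H.deleteEdges (faultsMeeting F ((H.deleteEdges F).ball v (3 * ρ)))).ball x (2 * ρ) ⊆
      (H.deleteEdges F).ball v (3 * ρ) := by
  rw [show 3 * ρ = ρ + 2 * ρ by ring]
  refine ball_subset_ball_of_locally_le (fun y hy z hyz => ?_) hx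
  rw [deleteEdges_adj] at hyz ⊢
  exact ⟨hyz.1, fun hF => hyz.2 ⟨hF, y, Sym2.mem_mk_left y z, hy⟩⟩

end Sparsify

section CriticalBound

variable {V : Type} [Fintype V] {H : SimpleGraph V} {F : Set (Sym2 V)} {u v : V} {ρ : ℕ∞}
  {g : ℕ} {q : ℝ}

lemma DegLE.exists_lt_ncard_edgeSet_le (hF : DegLE F g) (huv : H.Adj u v) (hρ : ρ ≠ 0)
    (hsep : 4 * ρ ≤ (H.deleteEdges F).edist u v)
    (hle : ((H.deleteEdges F).ball v ρ).ncard ≤ ((H.deleteEdges F).ball u ρ).ncard)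
    (hq : 0 ≤ q)
    (hgrow : (((H.deleteEdges F).ball v (3 * ρ)).ncard : ℝ) ≤
      q * ((H.deleteEdges F).ball v ρ).ncard) :
    ∃ H' < H, (H.edgeSet.ncard : ℝ) ≤
      H'.edgeSet.ncard + g * (q * (q + 1)) * (logVolume H (2 * ρ) - logVolume H' (2 * ρ)) := by
  set D := H.deleteEdges F
  set F' := faultsMeeting F (D.ball v (3 * ρ))
  set H' := H.deleteEdges F' with hH'
  have hH'H : H' ≤ H := deleteEdges_le F'
  have hDH : D ≤ H := deleteEdges_le F
  have hb : (0 : ℝ) < (D.ball v ρ).ncard := Nat.cast_pos.2 (ncard_ball_pos D v hρ)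
  have hloss : ∀ x ∈ D.ball v ρ, 1 / (q + 1) ≤
      Real.log (H.ball x (2 * ρ)).ncard - Real.log (H'.ball x (2 * ρ)).ncard := by
    intro x hx
    have hconf : H'.ball x (2 * ρ) ⊆ D.ball v (3 * ρ) := ball_deleteEdges_faultsMeeting_subset hx
    have hpos : 0 < (H'.ball x (2 * ρ)).ncard :=
      ncard_ball_pos H' x (mul_ne_zero two_ne_zero hρ)
    have hsize := ncard_ball_add_ncard_ball_le hDH hH'H huv hsep hx hconf
    refine one_div_le_log_sub_log hb (Nat.cast_pos.2 hpos) hq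
      ((Nat.cast_le.2 (Set.ncard_le_ncard hconf)).trans hgrow) ?_
    exact_mod_cast (Nat.add_le_add_left hle _).trans hsize
  have hdrop := ncard_mul_le_logVolume_sub hH'H (2 * ρ) (D.ball v ρ) hloss
  rw [mul_one_div, div_le_iff₀ (by positivity)] at hdrop
  have hdeleted : (F'.ncard : ℝ) ≤ g * (q * (D.ball v ρ).ncard) := calc
    (F'.ncard : ℝ) ≤ g * (D.ball v (3 * ρ)).ncard := mod_cast hF.ncard_faultsMeeting_le _
    _ ≤ g * (q * (D.ball v ρ).ncard) := by gcongr
  refine ⟨H', hH'H.lt_of_ne fun h => ?_, ?_⟩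
  · rw [h, sub_self, zero_mul] at hdrop
    exact hb.not_ge hdrop
  · calc (H.edgeSet.ncard : ℝ) ≤ H'.edgeSet.ncard + F'.ncard := by
          rw [hH', edgeSet_deleteEdges]
          exact_mod_cast Set.ncard_le_ncard_sdiff_add_ncard H.edgeSet F'
      _ ≤ H'.edgeSet.ncard +
          g * (q * ((logVolume H (2 * ρ) - logVolume H' (2 * ρ)) * (q + 1))) := by
        grw [hdeleted, hdrop]
      _ = _ := by ring

lemma IsFDCritical.exists_lt_ncard_edgeSet_le {f t N : ℕ} (hH : IsFDCritical H f t) (hne : H ≠ ⊥)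
    (ht : ∀ i < N, 4 * 3 ^ i ≤ t) (hN : 0 < N) (hq : 0 ≤ q)
    (hcard : (Fintype.card V : ℝ) ^ 2 ≤ q ^ N) :
    ∃ H' < H, (H.edgeSet.ncard : ℝ) ≤
      H'.edgeSet.ncard + (f + 1) * (q * (q + 1)) * (ballPotential N H - ballPotential N H') := by
  obtain ⟨u, v, huv, F, hF, hfar⟩ := hH H le_rfl hne
  set D := H.deleteEdges (insert s(u, v) F)
  have hρ_mono : Monotone fun i : ℕ => (3 : ℕ∞) ^ i := pow_right_mono₀ (by norm_num)
  obtain ⟨i, hi, hgrow_u, hgrow_v⟩ :=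
    exists_ncard_ball_succ_le_mul D u v hρ_mono (by simp) hN hq
      (by rwa [Nat.card_eq_fintype_card])
  simp only [pow_succ'] at hgrow_u hgrow_v
  have hsep : 4 * 3 ^ i ≤ D.edist u v := le_trans (by exact_mod_cast ht i hi) hfar.le
  obtain ⟨H', hlt, hedges⟩ : ∃ H' < H, (H.edgeSet.ncard : ℝ) ≤ H'.edgeSet.ncard +
      (f + 1 : ℕ) * (q * (q + 1)) * (logVolume H (2 * 3 ^ i) - logVolume H' (2 * 3 ^ i)) := by
    rcases le_total (D.ball v (3 ^ i)).ncard (D.ball u (3 ^ i)).ncard with hle | hle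
    · exact (hF.insert_fault _).exists_lt_ncard_edgeSet_le huv (by simp) hsep hle hq hgrow_v
    · exact (hF.insert_fault _).exists_lt_ncard_edgeSet_le huv.symm (by simp)
        (edist_comm (G := D) ▸ hsep) hle hq hgrow_u
  refine ⟨H', hlt, hedges.trans ?_⟩
  rw [Nat.cast_succ]
  have hgain := logVolume_sub_le_ballPotential_sub hlt.le hi
  grw [hgain]

lemma IsFDCritical.ncard_edgeSet_le {f t N : ℕ} (hH : IsFDCritical H f t)
    (ht : ∀ i < N, 4 * 3 ^ i ≤ t) (hN : 0 < N) (hq : 0 ≤ q)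
    (hcard : (Fintype.card V : ℝ) ^ 2 ≤ q ^ N) :
    (H.edgeSet.ncard : ℝ) ≤ (f + 1) * (q * (q + 1)) * ballPotential N H := by
  induction H using WellFoundedLT.induction with
  | ind H ih =>
    rcases eq_or_ne H ⊥ with rfl | hne
    · simpa using mul_nonneg (by positivity) (ballPotential_nonneg N _)
    · obtain ⟨H', hlt, hedges⟩ := hH.exists_lt_ncard_edgeSet_le hne ht hN hq hcard
      have hedges' := ih H' hlt (hH.mono hlt.le)
      linarith

end CriticalBound

section Bounds

lemma exists_isFDSpanner_ncard_edgeSet_le {V : Type} [Fintype V] [Nonempty V] (G : SimpleGraph V)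
    (f : ℕ) {k : ℕ} (hk : 0 < k) :
    ∃ H, IsFDSpanner G H f (108 ^ k) ∧ (H.edgeSet.ncard : ℝ) ≤
      8 * (f + 1) * k * (Fintype.card V : ℝ) ^ (1 + 1 / (k : ℝ)) * Real.log (Fintype.card V) := by
  obtain ⟨H, hspan, hcrit⟩ :=
    exists_isFDSpanner_isFDCritical G f (t := 108 ^ k) (by positivity)
  refine ⟨H, mod_cast hspan, ?_⟩
  have hradius : ∀ i < 4 * k, 4 * 3 ^ i ≤ 108 ^ k := by
    intro i hi
    calc 4 * 3 ^ i ≤ 4 * 3 ^ (4 * (k - 1) + 3) := by gcongr <;> omega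
      _ = 108 * 81 ^ (k - 1) := by rw [pow_add, pow_mul]; ring
      _ ≤ 108 * 108 ^ (k - 1) := by gcongr; norm_num
      _ = 108 ^ k := mul_pow_sub_one hk.ne' 108
  set n : ℝ := (Fintype.card V : ℝ)
  have hn_one : 1 ≤ n := Nat.one_le_cast.2 Fintype.card_pos
  set q : ℝ := n ^ (1 / (2 * k : ℝ)) with hq
  have hq_one : 1 ≤ q := Real.one_le_rpow hn_one (by positivity)
  have hq_sq : q ^ 2 = n ^ (1 / (k : ℝ)) := by
    rw [hq, ← Real.rpow_mul_natCast (by positivity)]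
    congr 1
    field_simp
    norm_num
  have hq_pow : q ^ (4 * k) = n ^ 2 := by
    rw [hq, ← Real.rpow_mul_natCast (by positivity), ← Real.rpow_natCast]
    congr 1
    push_cast
    field_simp
    norm_num
  have hpot : ballPotential (4 * k) H ≤ (4 * k) * (n * Real.log n) :=
    mod_cast ballPotential_le (4 * k) H
  calc (H.edgeSet.ncard : ℝ)
      ≤ (f + 1) * (q * (q + 1)) * ballPotential (4 * k) H :=
        hcrit.ncard_edgeSet_le hradius (by positivity) (by positivity) hq_pow.ge
    _ ≤ (f + 1) * (q * (q + q)) * (4 * k * (n * Real.log n)) := by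
        have := ballPotential_nonneg (4 * k) H
        gcongr
    _ = 8 * (f + 1) * k * (n * q ^ 2) * Real.log n := by ring
    _ = 8 * (f + 1) * k * n ^ (1 + 1 / (k : ℝ)) * Real.log n := by
        rw [hq_sq, Real.rpow_one_add' (by positivity) (by positivity)]

lemma rpow_one_add_one_div_min_le {n : ℝ} (hn : 1 ≤ n) (k : ℕ) :
    n ^ (1 + 1 / ((min k (⌊Real.log n⌋₊ + 1) : ℕ) : ℝ)) ≤ 3 * n ^ (1 + 1 / (k : ℝ)) := by
  have hn_pos : 0 < n := by linarith
  rcases min_choice k (⌊Real.log n⌋₊ + 1) with h | h <;> rw [h]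
  · exact le_mul_of_one_le_left (by positivity) (by norm_num)
  · rw [Real.rpow_add hn_pos, Real.rpow_add hn_pos, mul_left_comm]
    gcongr
    calc n ^ (1 / ((⌊Real.log n⌋₊ + 1 : ℕ) : ℝ))
        = Real.exp (Real.log n / ((⌊Real.log n⌋₊ + 1 : ℕ) : ℝ)) := by
          rw [Real.rpow_def_of_pos hn_pos, mul_one_div]
      _ ≤ Real.exp 1 := by
          gcongr
          refine div_le_one_of_le₀ ?_ (by positivity)
          exact_mod_cast (Nat.lt_floor_add_one (Real.log n)).le
      _ ≤ 3 * 1 := by linarith [Real.exp_one_lt_three]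
      _ ≤ 3 * n ^ (1 / (k : ℝ)) := by
          gcongr
          exact Real.one_le_rpow hn (by positivity)

lemma exists_isFDSpanner_ncard_edgeSet_le_log {V : Type} [Fintype V] [Nonempty V]
    (G : SimpleGraph V) (f : ℕ) {k : ℕ} (hk : 0 < k) :
    ∃ H, IsFDSpanner G H f (108 ^ k) ∧ (H.edgeSet.ncard : ℝ) ≤
      24 * (f + 1) * (Fintype.card V : ℝ) ^ (1 + 1 / (k : ℝ)) *
        (Real.log (Fintype.card V) * (Real.log (Fintype.card V) + 1)) := by
  set n : ℝ := (Fintype.card V : ℝ)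
  have hn_one : 1 ≤ n := Nat.one_le_cast.2 Fintype.card_pos
  have hlog : 0 ≤ Real.log n := Real.log_nonneg hn_one
  -- Beyond `k = log n`, a larger `k` no longer makes `n ^ (1 / k)` smaller than a constant.
  set m := min k (⌊Real.log n⌋₊ + 1)
  obtain ⟨H, hspan, hedges⟩ :=
    exists_isFDSpanner_ncard_edgeSet_le G f (lt_min hk (Nat.succ_pos ⌊Real.log n⌋₊))
  have hm_le : (m : ℝ) ≤ Real.log n + 1 := calc
    (m : ℝ) ≤ ⌊Real.log n⌋₊ + 1 := mod_cast min_le_right _ _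
    _ ≤ Real.log n + 1 := by grw [Nat.floor_le hlog]
  refine ⟨H, hspan.mono (pow_le_pow_right₀ (by norm_num) (min_le_left _ _)), hedges.trans ?_⟩
  calc 8 * (f + 1) * m * n ^ (1 + 1 / (m : ℝ)) * Real.log n
      ≤ 8 * (f + 1) * (Real.log n + 1) * (3 * n ^ (1 + 1 / (k : ℝ))) * Real.log n := by
        grw [hm_le, rpow_one_add_one_div_min_le hn_one]
    _ = 24 * (f + 1) * n ^ (1 + 1 / (k : ℝ)) * (Real.log n * (Real.log n + 1)) := by ring

end Bounds

section Constants

lemma ncard_edgeSet_le_choose_two {V : Type*} [Fintype V] (G : SimpleGraph V) :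
    G.edgeSet.ncard ≤ (Fintype.card V).choose 2 := by
  classical
  rw [← coe_edgeFinset, Set.ncard_coe_finset]
  exact G.card_edgeFinset_le_card_choose_two

lemma one_le_log_natCast {n : ℕ} (hn : 3 ≤ n) : 1 ≤ Real.log n := by
  have hn' : (3 : ℝ) ≤ n := Nat.ofNat_le_cast.2 hn
  rw [Real.le_log_iff_exp_le (by linarith)]
  exact Real.exp_one_lt_three.le.trans hn'

lemma two_le_log_natCast {n : ℕ} (hn : 9 ≤ n) : 2 ≤ Real.log n := by
  have hlog : Real.log ((3 : ℕ) ^ 2) ≤ Real.log n :=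
    Real.log_le_log (by norm_num) (by norm_num; exact_mod_cast hn)
  rw [Real.log_pow] at hlog
  have hlog_three := one_le_log_natCast (n := 3) le_rfl
  push_cast at hlog
  push_cast at hlog_three
  linarith

lemma choose_two_le_mul_log_pow {n : ℕ} (hn : n < 9) :
    (n.choose 2 : ℝ) ≤ 7 * n * Real.log n ^ 7 := by
  rcases lt_or_ge n 3 with hn3 | hn3
  · interval_cases n
    · simp
    · simp
    · have hlog : (0.693 : ℝ) ^ 7 ≤ Real.log 2 ^ 7 := by
        gcongr
        linarith [Real.log_two_gt_d9]
      norm_num at hlog ⊢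
      linarith
  · calc (n.choose 2 : ℝ) = n * (n - 1) / 2 := Nat.cast_choose_two ℝ n
      _ ≤ 7 * n * 1 := by
        have : (n : ℝ) ≤ 9 := mod_cast hn.le
        nlinarith
      _ ≤ 7 * n * Real.log n ^ 7 := by
        gcongr
        exact one_le_pow₀ (one_le_log_natCast hn3)

lemma choose_two_le_of_lt_nine_or_eq_one {n k : ℕ} (hn : 0 < n) (h : n < 9 ∨ k = 1) :
    (n.choose 2 : ℝ) ≤ 7 * (n : ℝ) ^ (1 + 1 / (k : ℝ)) * Real.log n ^ 7 := by
  have hn_one : (1 : ℝ) ≤ n := Nat.one_le_cast.2 hn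
  rcases lt_or_ge n 9 with hn_lt | hn_ge
  · grw [choose_two_le_mul_log_pow hn_lt]
    gcongr
    exact Real.self_le_rpow_of_one_le hn_one (le_add_of_nonneg_right (by positivity))
  · obtain rfl : k = 1 := h.resolve_left hn_ge.not_gt
    calc (n.choose 2 : ℝ) ≤ 7 * (n : ℝ) ^ 2 * 1 := by
          rw [Nat.cast_choose_two]
          nlinarith
      _ ≤ 7 * (n : ℝ) ^ (1 + 1 / ((1 : ℕ) : ℝ)) * Real.log n ^ 7 := by
          rw [Nat.cast_one, div_one, one_add_one_eq_two, Real.rpow_two]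
          gcongr
          exact one_le_pow₀ (one_le_log_natCast (by omega))

lemma pow_le_rpow_seven_mul {k : ℕ} (hk : 2 ≤ k) : (108 : ℝ) ^ k ≤ (k : ℝ) ^ (7 * k : ℝ) := by
  have hk' : (2 : ℝ) ≤ k := Nat.ofNat_le_cast.2 hk
  calc (108 : ℝ) ^ k ≤ (2 ^ 7) ^ k := by gcongr; norm_num
    _ ≤ ((k : ℝ) ^ 7) ^ k := by gcongr
    _ = (k : ℝ) ^ (7 * k : ℝ) := by
      rw [← pow_mul, ← Real.rpow_natCast, Nat.cast_mul, Nat.cast_ofNat]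

lemma add_one_mul_le_mul_pow_seven {f L : ℝ} (hf : 1 ≤ f) (hL : 2 ≤ L) :
    24 * (f + 1) * (L * (L + 1)) ≤ 7 * f * L ^ 7 := by
  calc 24 * (f + 1) * (L * (L + 1)) ≤ 24 * (f + f) * (L * (L + L)) := by gcongr; linarith
    _ = 96 * f * L ^ 2 := by ring
    _ ≤ 7 * f * 2 ^ 5 * L ^ 2 := by nlinarith [sq_nonneg L]
    _ ≤ 7 * f * L ^ 5 * L ^ 2 := by gcongr
    _ = 7 * f * L ^ 7 := by ring

end Constants

/-- There is an absolute constant `c > 0` such that every `n`-vertex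
unweighted graph admits an `f`-FD `k^{c·k}`-spanner with at most
`c·f·n^{1+1/k}·(log n)^c` edges. -/
theorem fd_expander_spanner_exists :
    ∃ c : ℝ, 0 < c ∧
      ∀ (f n k : ℕ), 0 < f → 0 < n → 0 < k →
        ∀ (V : Type) [Fintype V], Fintype.card V = n →
          ∀ G : SimpleGraph V,
            ∃ H : SimpleGraph V,
              IsFDSpanner G H f ((k : ℝ) ^ (c * k)) ∧
              (H.edgeSet.ncard : ℝ) ≤
                c * f * (n : ℝ) ^ (1 + 1 / (k : ℝ)) * Real.log n ^ c := by
  refine ⟨7, by norm_num, ?_⟩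
  rintro f n k hf hn hk V _ rfl G
  have : Nonempty V := Fintype.card_pos_iff.1 hn
  have hf_one : (1 : ℝ) ≤ f := Nat.one_le_cast.2 hf
  have hk_one : (1 : ℝ) ≤ k := Nat.one_le_cast.2 hk
  rw [Real.rpow_ofNat]
  by_cases hsmall : Fintype.card V < 9 ∨ k = 1
  · refine ⟨G, (isFDSpanner_self G f).mono (Real.one_le_rpow hk_one (by positivity)), ?_⟩
    calc (G.edgeSet.ncard : ℝ) ≤ (Fintype.card V).choose 2 :=
          Nat.cast_le.2 (ncard_edgeSet_le_choose_two G)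
      _ ≤ 7 * (Fintype.card V : ℝ) ^ (1 + 1 / (k : ℝ)) * Real.log (Fintype.card V) ^ 7 :=
        choose_two_le_of_lt_nine_or_eq_one hn hsmall
      _ ≤ _ := by gcongr; exact le_mul_of_one_le_right (by norm_num) hf_one
  · obtain ⟨H, hspan, hedges⟩ := exists_isFDSpanner_ncard_edgeSet_le_log G f hk
    refine ⟨H, hspan.mono (pow_le_rpow_seven_mul (by omega)), hedges.trans ?_⟩
    have hlog := two_le_log_natCast (n := Fintype.card V) (by omega)
    have hconst := add_one_mul_le_mul_pow_seven hf_one hlog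
    rw [mul_right_comm, mul_right_comm (7 * (f : ℝ))]
    gcongr
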